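/- Let a ∈ (−1,1) and b > 1. There exists a constant C > 0 such that for every g ∈ X_{a,b} the function L[g] belongs to X_{a,b} and satisfies ‖L[g]‖_{X_{a,b}} ≤ C ‖g‖_{X_{a,b}}; in particular L is well defined on X_{a,b}. -/

import Mathlib

open MeasureTheory Real Set Filter

noncomputable def weight (a b x : ℝ) : ℝ := if x ≤ 1 then x ^ a else x ^ b

noncomputable def Xnorm (a b : ℝ) (g : ℝ → ℝ) : ℝ :=
  ∫ x in Ioi (0:ℝ), |g x| * weight a b x

def MemX (a b : ℝ) (g : ℝ → ℝ) : Prop :=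
  IntegrableOn (fun x => g x * weight a b x) (Ioi 0)

noncomputable def Kern (ε : ℝ) (W : ℝ → ℝ → ℝ) (x y : ℝ) : ℝ := 2 + ε * W x y

def GoodW (α : ℝ) (W : ℝ → ℝ → ℝ) : Prop :=
  ContinuousOn (fun p : ℝ × ℝ => W p.1 p.2) (Ioi 0 ×ˢ Ioi 0) ∧
  (∀ x y : ℝ, 0 < x → 0 < y → W x y = W y x) ∧
  (∀ l x y : ℝ, 0 < l → 0 < x → 0 < y → W (l * x) (l * y) = W x y) ∧
  (∀ x y : ℝ, 0 < x → 0 < y → 0 ≤ W x y ∧ W x y ≤ (x / y) ^ α + (y / x) ^ α)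

def IsProfile (K : ℝ → ℝ → ℝ) (φ : ℝ → ℝ) : Prop :=
  LocallyIntegrableOn φ (Ioi 0) ∧
  (∀ᵐ x ∂(volume.restrict (Ioi (0:ℝ))), 0 ≤ φ x) ∧
  IntegrableOn (fun x => x * φ x) (Ioi 0) ∧
  (∀ᵐ x ∂(volume.restrict (Ioi (0:ℝ))),
    x ^ 2 * φ x = ∫ y in Ioo 0 x, ∫ z in Ioi (x - y), y * K y z * φ y * φ z)

def IsNormalised (φ : ℝ → ℝ) : Prop := ∫ x in Ioi (0:ℝ), x * φ x = 1

noncomputable def Lop (g : ℝ → ℝ) (x : ℝ) : ℝ :=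
  g x - (2 / x ^ 2) *
    ∫ y in Ioo 0 x, ∫ z in Ioi (x - y), (y * exp (-y) * g z + y * g y * exp (-z))

/-!
Write `∫ W · flux f h = ∬ y f(y) h(z) K(y, z)` with `K(y, z) = ∫_y^{y+z} W` (Fubini). The operator
`Lop` is the identity minus `2 / x²` times two fluxes, each with `e^{-x}` as one argument. With
`W = 2 ω / x²`, `ω = weight a b`, boundedness therefore reduces to the two pointwise estimates
`∫ y e^{-y} K(y, z) dy ≤ C ω(z)` and `∫ y e^{-z} K(y, z) dz ≤ C ω(y)`.

As `ω ≤ x^a + x^b`, and `ω ≥ x^c` whenever `a ≤ c ≤ b`, only pure powers have to be treated.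
The one delicate case is the power `a` in the first estimate, where `K` is singular at `y = 0`:
splitting `x^{a-2} = x^{c-2} x^{c-1}` with `c = (1 + a) / 2 ∈ (0, 1)` and integrating only the
second factor over `(y, y + z)` gives `y K(y, z) ≤ y^{c-1} z^c / c`, which is integrable
against `e^{-y}`.
-/

open scoped ENNReal NNReal

section Fubini

variable {α β : Type*} [MeasurableSpace α] [MeasurableSpace β] {μ : Measure α} {ν : Measure β}

lemma setLIntegral_setLIntegral_eq_lintegral_indicator {A : Set α} (hA : MeasurableSet A)
    {S : α → Set β} (hS : MeasurableSet {p : α × β | p.1 ∈ A ∧ p.2 ∈ S p.1}) (f : α → β → ℝ≥0∞) :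
    ∫⁻ x in A, ∫⁻ y in S x, f x y ∂ν ∂μ =
      ∫⁻ x, ∫⁻ y, {p : α × β | p.1 ∈ A ∧ p.2 ∈ S p.1}.indicator (Function.uncurry f) (x, y)
        ∂ν ∂μ := by
  rw [← lintegral_indicator hA]
  refine lintegral_congr fun x => ?_
  by_cases hx : x ∈ A
  · have hSx : MeasurableSet (S x) := by simpa [hx] using measurable_prodMk_left (x := x) hS
    rw [indicator_of_mem hx, ← lintegral_indicator hSx]
    refine lintegral_congr fun y => ?_
    by_cases hy : y ∈ S x <;> simp [hx, hy]
  · simp [indicator, hx]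

lemma setLIntegral_setLIntegral_swap [SFinite μ] [SFinite ν] {A : Set α} {B : Set β}
    {S : α → Set β} {T : β → Set α} (hA : MeasurableSet A) (hB : MeasurableSet B)
    (hS : MeasurableSet {p : α × β | p.1 ∈ A ∧ p.2 ∈ S p.1})
    (hST : ∀ x y, x ∈ A ∧ y ∈ S x ↔ y ∈ B ∧ x ∈ T y)
    {f : α → β → ℝ≥0∞} (hf : Measurable (Function.uncurry f)) :
    ∫⁻ x in A, ∫⁻ y in S x, f x y ∂ν ∂μ = ∫⁻ y in B, ∫⁻ x in T y, f x y ∂μ ∂ν := by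
  have hT : MeasurableSet {p : β × α | p.1 ∈ B ∧ p.2 ∈ T p.1} := by
    simpa only [preimage_ofPred_eq, Prod.fst_swap, Prod.snd_swap, hST] using measurable_swap hS
  rw [setLIntegral_setLIntegral_eq_lintegral_indicator hA hS,
    setLIntegral_setLIntegral_eq_lintegral_indicator hB hT (fun y x => f x y),
    lintegral_lintegral_swap (f := fun x y => indicator _ _ (x, y))
      (hf.indicator hS).aemeasurable]
  refine lintegral_congr fun y => lintegral_congr fun x => ?_
  by_cases hxy : y ∈ B ∧ x ∈ T y <;> simp [hST, hxy]

lemma measurable_setLIntegral_section [SFinite ν] {s : Set (α × β)} (hs : MeasurableSet s)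
    {f : α → β → ℝ≥0∞} (hf : Measurable (Function.uncurry f)) :
    Measurable fun x => ∫⁻ y in {y | (x, y) ∈ s}, f x y ∂ν := by
  have hsection (x : α) : ∫⁻ y in {y | (x, y) ∈ s}, f x y ∂ν =
      ∫⁻ y, s.indicator (Function.uncurry f) (x, y) ∂ν :=
    (lintegral_indicator (measurable_prodMk_left hs) _).symm
  simp only [hsection]
  exact (hf.indicator hs).lintegral_prod_right'

lemma stronglyMeasurable_setIntegral_section [SFinite ν] {E : Type*} [NormedAddCommGroup E]
    [NormedSpace ℝ E] {s : Set (α × β)} (hs : MeasurableSet s) {f : α → β → E}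
    (hf : StronglyMeasurable (Function.uncurry f)) :
    StronglyMeasurable fun x => ∫ y in {y | (x, y) ∈ s}, f x y ∂ν := by
  have hsection (x : α) : ∫ y in {y | (x, y) ∈ s}, f x y ∂ν =
      ∫ y, s.indicator (Function.uncurry f) (x, y) ∂ν :=
    (integral_indicator (measurable_prodMk_left hs)).symm
  simp only [hsection]
  exact (hf.indicator hs).integral_prod_right'

end Fubini

/-- The coagulation flux `∫₀ˣ ∫_{x-y}^∞ y f(y) h(z) dz dy`, with values in `[0, ∞]`. -/
noncomputable def flux (f h : ℝ → ℝ≥0∞) (x : ℝ) : ℝ≥0∞ :=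
  ∫⁻ y in Ioo 0 x, ENNReal.ofReal y * f y * ∫⁻ z in Ioi (x - y), h z

/-- The factor multiplying `y f(y) h(z)` when the flux of `f` and `h` is integrated against `W`. -/
noncomputable def fluxKernel (W : ℝ → ℝ≥0∞) (y z : ℝ) : ℝ≥0∞ :=
  ∫⁻ x in Ioo y (y + z), W x

section Flux

variable {W f h w : ℝ → ℝ≥0∞}

lemma measurable_setLIntegral_Ioi (h : ℝ → ℝ≥0∞) : Measurable fun t => ∫⁻ z in Ioi t, h z :=
  Antitone.measurable fun _ _ hst => lintegral_mono_set (Ioi_subset_Ioi hst)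

lemma measurableSet_setOf_mem_Ioo {α : Type*} [MeasurableSpace α] {u v w : α → ℝ}
    (hu : Measurable u) (hv : Measurable v) (hw : Measurable w) :
    MeasurableSet {p | u p ∈ Ioo (v p) (w p)} :=
  (measurableSet_lt hv hu).inter (measurableSet_lt hu hw)

lemma measurable_flux (hf : Measurable f) (h : ℝ → ℝ≥0∞) : Measurable (flux f h) := by
  have htail := measurable_setLIntegral_Ioi h
  exact measurable_setLIntegral_section (s := {p : ℝ × ℝ | p.2 ∈ Ioo 0 p.1})
    (f := fun x y => ENNReal.ofReal y * f y * ∫⁻ z in Ioi (x - y), h z)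
    (measurableSet_setOf_mem_Ioo (by fun_prop) (by fun_prop) (by fun_prop))
    (Measurable.mul (by fun_prop) (htail.comp (by fun_prop)))

lemma measurable_fluxKernel (hW : Measurable W) : Measurable (Function.uncurry (fluxKernel W)) :=
  measurable_setLIntegral_section (s := {q : (ℝ × ℝ) × ℝ | q.2 ∈ Ioo q.1.1 (q.1.1 + q.1.2)})
    (f := fun _ x => W x)
    (measurableSet_setOf_mem_Ioo (by fun_prop) (by fun_prop) (by fun_prop))
    (hW.comp measurable_snd)

lemma setLIntegral_mul_setLIntegral_Ioi_sub (hW : Measurable W) (hh : Measurable h) (y : ℝ) :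
    ∫⁻ x in Ioi y, W x * ∫⁻ z in Ioi (x - y), h z =
      ∫⁻ z in Ioi 0, h z * fluxKernel W y z := by
  have hdomain : MeasurableSet {p : ℝ × ℝ | p.1 ∈ Ioi y ∧ p.2 ∈ Ioi (p.1 - y)} :=
    (measurableSet_lt (by fun_prop) (by fun_prop)).inter
      (measurableSet_lt (by fun_prop) (by fun_prop))
  have hmem (x z : ℝ) : x ∈ Ioi y ∧ z ∈ Ioi (x - y) ↔ z ∈ Ioi 0 ∧ x ∈ Ioo y (y + z) := by
    simp only [mem_Ioi, mem_Ioo]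
    constructor <;> rintro ⟨_, _⟩ <;> grind
  calc ∫⁻ x in Ioi y, W x * ∫⁻ z in Ioi (x - y), h z
      = ∫⁻ x in Ioi y, ∫⁻ z in Ioi (x - y), W x * h z := by
        simp only [lintegral_const_mul _ hh]
    _ = ∫⁻ z in Ioi 0, ∫⁻ x in Ioo y (y + z), W x * h z :=
        setLIntegral_setLIntegral_swap measurableSet_Ioi measurableSet_Ioi hdomain hmem
          (by unfold Function.uncurry; fun_prop)
    _ = ∫⁻ z in Ioi 0, h z * fluxKernel W y z := by
        simp only [lintegral_mul_const _ hW, fluxKernel, mul_comm]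

theorem lintegral_mul_flux (hW : Measurable W) (hf : Measurable f) (hh : Measurable h) :
    ∫⁻ x in Ioi 0, W x * flux f h x =
      ∫⁻ y in Ioi 0, ENNReal.ofReal y * f y * ∫⁻ z in Ioi 0, h z * fluxKernel W y z := by
  let tail (t : ℝ) : ℝ≥0∞ := ∫⁻ z in Ioi t, h z
  have htail : Measurable tail := measurable_setLIntegral_Ioi h
  have hdomain : MeasurableSet {p : ℝ × ℝ | p.1 ∈ Ioi 0 ∧ p.2 ∈ Ioo 0 p.1} :=
    (measurableSet_lt (by fun_prop) (by fun_prop)).inter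
      (measurableSet_setOf_mem_Ioo (by fun_prop) (by fun_prop) (by fun_prop))
  have hmem (x y : ℝ) : x ∈ Ioi 0 ∧ y ∈ Ioo 0 x ↔ y ∈ Ioi 0 ∧ x ∈ Ioi y := by
    simp only [mem_Ioi, mem_Ioo]
    constructor <;> rintro ⟨_, _⟩ <;> grind
  calc ∫⁻ x in Ioi 0, W x * flux f h x
      = ∫⁻ x in Ioi 0, ∫⁻ y in Ioo 0 x, ENNReal.ofReal y * f y * (W x * tail (x - y)) := by
        refine lintegral_congr fun x => ?_
        have hflow : Measurable fun y => ENNReal.ofReal y * f y * tail (x - y) := by fun_prop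
        rw [flux, ← lintegral_const_mul _ hflow]
        exact lintegral_congr fun y => mul_left_comm _ _ _
    _ = ∫⁻ y in Ioi 0, ∫⁻ x in Ioi y, ENNReal.ofReal y * f y * (W x * tail (x - y)) :=
        setLIntegral_setLIntegral_swap measurableSet_Ioi measurableSet_Ioi hdomain hmem
          (by unfold Function.uncurry; fun_prop)
    _ = ∫⁻ y in Ioi 0, ENNReal.ofReal y * f y * ∫⁻ z in Ioi 0, h z * fluxKernel W y z := by
        refine lintegral_congr fun y => ?_
        rw [lintegral_const_mul _ (by fun_prop), setLIntegral_mul_setLIntegral_Ioi_sub hW hh]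

lemma lintegral_mul_flux_le_of_left {C : ℝ≥0} (hW : Measurable W) (hf : Measurable f)
    (hh : Measurable h)
    (hC : ∀ z > 0, ∫⁻ y in Ioi 0, ENNReal.ofReal y * fluxKernel W y z * f y ≤ C * w z) :
    ∫⁻ x in Ioi 0, W x * flux f h x ≤ C * ∫⁻ z in Ioi 0, h z * w z := by
  have hK : Measurable fun p : ℝ × ℝ => fluxKernel W p.1 p.2 := measurable_fluxKernel hW
  calc ∫⁻ x in Ioi 0, W x * flux f h x
      = ∫⁻ y in Ioi 0, ∫⁻ z in Ioi 0, h z * (ENNReal.ofReal y * fluxKernel W y z * f y) := by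
        rw [lintegral_mul_flux hW hf hh]
        refine lintegral_congr fun y => ?_
        rw [← lintegral_const_mul _ (by fun_prop)]
        exact lintegral_congr fun z => by ring
    _ = ∫⁻ z in Ioi 0, h z * ∫⁻ y in Ioi 0, ENNReal.ofReal y * fluxKernel W y z * f y := by
        rw [lintegral_lintegral_swap (by unfold Function.uncurry; fun_prop)]
        exact lintegral_congr fun z => lintegral_const_mul _ (by fun_prop)
    _ ≤ ∫⁻ z in Ioi 0, C * (h z * w z) :=
        setLIntegral_mono' measurableSet_Ioi fun z hz =>
          (mul_le_mul_right (hC z hz) _).trans_eq (mul_left_comm _ _ _)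
    _ = C * ∫⁻ z in Ioi 0, h z * w z := lintegral_const_mul' _ _ ENNReal.coe_ne_top

lemma lintegral_mul_flux_le_of_right {C : ℝ≥0} (hW : Measurable W) (hf : Measurable f)
    (hh : Measurable h)
    (hC : ∀ y > 0, ∫⁻ z in Ioi 0, ENNReal.ofReal y * fluxKernel W y z * h z ≤ C * w y) :
    ∫⁻ x in Ioi 0, W x * flux f h x ≤ C * ∫⁻ y in Ioi 0, f y * w y := by
  have hK : Measurable fun p : ℝ × ℝ => fluxKernel W p.1 p.2 := measurable_fluxKernel hW
  calc ∫⁻ x in Ioi 0, W x * flux f h x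
      = ∫⁻ y in Ioi 0, f y * ∫⁻ z in Ioi 0, ENNReal.ofReal y * fluxKernel W y z * h z := by
        rw [lintegral_mul_flux hW hf hh]
        refine lintegral_congr fun y => ?_
        rw [← lintegral_const_mul _ (by fun_prop), ← lintegral_const_mul _ (by fun_prop)]
        exact lintegral_congr fun z => by ring
    _ ≤ ∫⁻ y in Ioi 0, C * (f y * w y) :=
        setLIntegral_mono' measurableSet_Ioi fun y hy =>
          (mul_le_mul_right (hC y hy) _).trans_eq (mul_left_comm _ _ _)
    _ = C * ∫⁻ y in Ioi 0, f y * w y := lintegral_const_mul' _ _ ENNReal.coe_ne_top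

end Flux

/-- The pure power weight `x ^ p` divided by the factor `x²` of the flux term in `Lop`. -/
noncomputable def powerDensity (p x : ℝ) : ℝ≥0∞ := ENNReal.ofReal (x ^ (p - 2))

/-- The weight `weight a b` multiplied by the prefactor `2 / x²` of the flux term in `Lop`. -/
noncomputable def scaledWeight (a b x : ℝ) : ℝ≥0∞ := ENNReal.ofReal (2 / x ^ 2 * weight a b x)

/-- The self-similar profile `e^{-x}` of the constant kernel, with values in `[0, ∞]`. -/
noncomputable def expProfile (x : ℝ) : ℝ≥0∞ := ENNReal.ofReal (exp (-x))

@[fun_prop]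
lemma measurable_powerDensity (p : ℝ) : Measurable (powerDensity p) := by
  unfold powerDensity
  fun_prop

@[fun_prop]
lemma measurable_expProfile : Measurable expProfile := by
  unfold expProfile
  fun_prop

@[fun_prop]
lemma measurable_weight (a b : ℝ) : Measurable (weight a b) :=
  Measurable.ite measurableSet_Iic (by fun_prop) (by fun_prop)

@[fun_prop]
lemma measurable_scaledWeight (a b : ℝ) : Measurable (scaledWeight a b) := by
  unfold scaledWeight
  fun_prop

section PowerKernel

variable {a b c r u v y z : ℝ}

lemma lintegral_Ioo_rpow (hr : r ≠ -1) (hu : 0 < u) (huv : u ≤ v) :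
    ∫⁻ x in Ioo u v, ENNReal.ofReal (x ^ r) =
      ENNReal.ofReal ((v ^ (r + 1) - u ^ (r + 1)) / (r + 1)) := by
  have hzero : (0 : ℝ) ∉ uIcc u v := by simp [uIcc_of_le huv, hu]
  have hint : IntegrableOn (fun x => x ^ r) (Ioo u v) :=
    (intervalIntegrable_iff_integrableOn_Ioo_of_le huv).1
      (intervalIntegral.intervalIntegrable_rpow (Or.inr hzero))
  have hnonneg : ∀ᵐ x ∂volume.restrict (Ioo u v), 0 ≤ x ^ r :=
    (ae_restrict_iff' measurableSet_Ioo).2 <| Eventually.of_forall fun x hx =>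
      rpow_nonneg (hu.trans hx.1).le r
  rw [← ofReal_integral_eq_lintegral_ofReal hint hnonneg, ← integral_Ioc_eq_integral_Ioo,
    ← intervalIntegral.integral_of_le huv, integral_rpow (Or.inr ⟨hr, hzero⟩)]

lemma mul_fluxKernel_powerDensity_le_rpow_mul_rpow (hc : 0 < c) (hc1 : c ≤ 1) (hy : 0 < y)
    (hz : 0 ≤ z) :
    ENNReal.ofReal y * fluxKernel (powerDensity (2 * c - 1)) y z ≤
      ENNReal.ofReal (z ^ c / c) * ENNReal.ofReal (y ^ (c - 1)) := by
  have hsplit : ∀ x ∈ Ioo y (y + z), x ^ (2 * c - 1 - 2) ≤ y ^ (c - 2) * x ^ (c - 1) := by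
    intro x hx
    have hx0 : 0 < x := hy.trans hx.1
    calc x ^ (2 * c - 1 - 2) = x ^ (c - 2) * x ^ (c - 1) := by rw [← rpow_add hx0]; ring_nf
      _ ≤ y ^ (c - 2) * x ^ (c - 1) := by
        gcongr ?_ * _
        exact rpow_le_rpow_of_nonpos hy hx.1.le (by linarith)
  have hy_mul : y * y ^ (c - 2) = y ^ (c - 1) := by
    rw [mul_comm, ← rpow_add_one hy.ne']; ring_nf
  have hsub : (y + z) ^ c - y ^ c ≤ z ^ c := by
    linarith [rpow_add_le_add_rpow hy.le hz hc.le hc1]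
  calc ENNReal.ofReal y * fluxKernel (powerDensity (2 * c - 1)) y z
      ≤ ENNReal.ofReal y * ∫⁻ x in Ioo y (y + z),
          ENNReal.ofReal (y ^ (c - 2)) * ENNReal.ofReal (x ^ (c - 1)) := by
        refine mul_le_mul_right (setLIntegral_mono' measurableSet_Ioo fun x hx => ?_) _
        rw [← ENNReal.ofReal_mul (by positivity)]
        exact ENNReal.ofReal_le_ofReal (hsplit x hx)
    _ = ENNReal.ofReal (((y + z) ^ c - y ^ c) / c) * ENNReal.ofReal (y ^ (c - 1)) := by
        rw [lintegral_const_mul _ (by fun_prop), lintegral_Ioo_rpow (by linarith) hy (by linarith),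
          ← mul_assoc, ← ENNReal.ofReal_mul hy.le, hy_mul, sub_add_cancel, mul_comm]
    _ ≤ ENNReal.ofReal (z ^ c / c) * ENNReal.ofReal (y ^ (c - 1)) := by gcongr

lemma mul_fluxKernel_powerDensity_le_rpow (ha : a < 1) (hy : 0 < y) (hz : 0 ≤ z) :
    ENNReal.ofReal y * fluxKernel (powerDensity a) y z ≤ ENNReal.ofReal (y ^ a / (1 - a)) := by
  have : 0 < 1 - a := by linarith
  unfold fluxKernel powerDensity
  rw [lintegral_Ioo_rpow (by linarith) hy (by linarith), ← ENNReal.ofReal_mul hy.le]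
  refine ENNReal.ofReal_le_ofReal ?_
  calc y * (((y + z) ^ (a - 2 + 1) - y ^ (a - 2 + 1)) / (a - 2 + 1))
      = y * (y ^ (a - 1) - (y + z) ^ (a - 1)) / (1 - a) := by
        rw [show a - 2 + 1 = a - 1 by ring, ← neg_sub 1 a, div_neg, ← neg_div, neg_sub,
          mul_div_assoc]
    _ ≤ y * y ^ (a - 1) / (1 - a) := by
        gcongr
        exact sub_le_self _ (by positivity)
    _ = y ^ a / (1 - a) := by rw [mul_comm, rpow_sub_one hy.ne', div_mul_cancel₀ _ hy.ne']

lemma mul_fluxKernel_powerDensity_le_mul_add_rpow (hb : 1 ≤ b) (hy : 0 < y) :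
    ENNReal.ofReal y * fluxKernel (powerDensity b) y z ≤
      ENNReal.ofReal z * ENNReal.ofReal ((y + z) ^ (b - 1)) := by
  have hbound : ∀ x ∈ Ioo y (y + z), y * x ^ (b - 2) ≤ (y + z) ^ (b - 1) := by
    intro x hx
    have hx0 : 0 < x := hy.trans hx.1
    calc y * x ^ (b - 2) ≤ x * x ^ (b - 2) := by gcongr; exact hx.1.le
      _ = x ^ (b - 1) := by rw [mul_comm, ← rpow_add_one hx0.ne']; ring_nf
      _ ≤ (y + z) ^ (b - 1) := rpow_le_rpow hx0.le hx.2.le (by linarith)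
  calc ENNReal.ofReal y * fluxKernel (powerDensity b) y z
      = ∫⁻ x in Ioo y (y + z), ENNReal.ofReal (y * x ^ (b - 2)) := by
        simp only [ENNReal.ofReal_mul hy.le]
        exact (lintegral_const_mul _ (measurable_powerDensity b)).symm
    _ ≤ ∫⁻ _ in Ioo y (y + z), ENNReal.ofReal ((y + z) ^ (b - 1)) :=
        setLIntegral_mono' measurableSet_Ioo fun x hx => ENNReal.ofReal_le_ofReal (hbound x hx)
    _ = ENNReal.ofReal z * ENNReal.ofReal ((y + z) ^ (b - 1)) := by
        rw [setLIntegral_const, volume_Ioo, add_sub_cancel_left, mul_comm]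

lemma fluxKernel_powerDensity_le_add_rpow_div (hb : 1 < b) (hy : 0 < y) (hz : 0 ≤ z) :
    fluxKernel (powerDensity b) y z ≤ ENNReal.ofReal ((y + z) ^ (b - 1) / (b - 1)) := by
  have : 0 < b - 1 := by linarith
  unfold fluxKernel powerDensity
  rw [lintegral_Ioo_rpow (by linarith) hy (by linarith), show b - 2 + 1 = b - 1 by ring]
  gcongr
  exact sub_le_self _ (by positivity)

end PowerKernel

section ExponentialMoments

variable {s z : ℝ}

lemma lintegral_rpow_mul_expProfile (hs : 0 < s) :
    ∫⁻ y in Ioi 0, ENNReal.ofReal (y ^ (s - 1)) * expProfile y = ENNReal.ofReal (Gamma s) := by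
  have hnonneg : ∀ᵐ y ∂volume.restrict (Ioi 0), 0 ≤ exp (-y) * y ^ (s - 1) :=
    (ae_restrict_iff' measurableSet_Ioi).2 <| Eventually.of_forall fun y hy =>
      mul_nonneg (exp_pos _).le (rpow_nonneg (mem_Ioi.1 hy).le _)
  rw [Gamma_eq_integral hs,
    ofReal_integral_eq_lintegral_ofReal (GammaIntegral_convergent hs) hnonneg]
  refine lintegral_congr fun y => ?_
  rw [ENNReal.ofReal_mul (exp_pos _).le, mul_comm, expProfile]

lemma lintegral_expProfile_Ioi (t : ℝ) : ∫⁻ z in Ioi t, expProfile z = expProfile t := by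
  unfold expProfile
  rw [← ofReal_integral_eq_lintegral_ofReal (integrableOn_exp_neg_Ioi t)
    (Eventually.of_forall fun z => (exp_pos _).le), integral_exp_neg_Ioi]

lemma lintegral_add_rpow_mul_expProfile_le (hs : 0 ≤ s) (hz : 0 ≤ z) :
    ∫⁻ y in Ioi 0, ENNReal.ofReal ((y + z) ^ s) * expProfile y ≤
      ENNReal.ofReal (2 ^ s * (Gamma (s + 1) + z ^ s)) := by
  have hGamma : 0 < Gamma (s + 1) := Gamma_pos_of_pos (by linarith)
  have hadd : ∀ y > 0, ENNReal.ofReal ((y + z) ^ s) ≤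
      ENNReal.ofReal (2 ^ s) * (ENNReal.ofReal (y ^ s) + ENNReal.ofReal (z ^ s)) := by
    intro y hy
    have h := ENNReal.add_rpow_le_two_rpow_mul_rpow_add_rpow
      (ENNReal.ofReal y) (ENNReal.ofReal z) hs
    rw [← ENNReal.ofReal_add hy.le hz] at h
    simpa [ENNReal.ofReal_rpow_of_nonneg, hs, hz, hy.le, add_nonneg,
      ← ENNReal.ofReal_rpow_of_pos] using h
  calc ∫⁻ y in Ioi 0, ENNReal.ofReal ((y + z) ^ s) * expProfile y
      ≤ ∫⁻ y in Ioi 0, ENNReal.ofReal (2 ^ s) *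
          (ENNReal.ofReal (y ^ s) * expProfile y + ENNReal.ofReal (z ^ s) * expProfile y) :=
        setLIntegral_mono' measurableSet_Ioi fun y hy =>
          (mul_le_mul_left (hadd y hy) _).trans_eq (by ring)
    _ = ENNReal.ofReal (2 ^ s * (Gamma (s + 1) + z ^ s)) := by
        have hmoment := lintegral_rpow_mul_expProfile (s := s + 1) (by linarith)
        rw [add_sub_cancel_right] at hmoment
        rw [lintegral_const_mul _ (by fun_prop), lintegral_add_left (by fun_prop), hmoment,
          lintegral_const_mul _ (by fun_prop), lintegral_expProfile_Ioi]
        simp [expProfile, ENNReal.ofReal_mul, ENNReal.ofReal_add, hGamma.le, rpow_nonneg, hz]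

end ExponentialMoments

section WeightBounds

variable {a b c x y z : ℝ}

lemma weight_pos (a b : ℝ) (hx : 0 < x) : 0 < weight a b x := by
  unfold weight
  split_ifs <;> positivity

lemma rpow_le_weight (hac : a ≤ c) (hcb : c ≤ b) (hx : 0 < x) : x ^ c ≤ weight a b x := by
  unfold weight
  split_ifs with h
  · exact rpow_le_rpow_of_exponent_ge hx h hac
  · exact rpow_le_rpow_of_exponent_le (not_le.1 h).le hcb

lemma weight_le_rpow_add_rpow (hx : 0 ≤ x) : weight a b x ≤ x ^ a + x ^ b := by
  unfold weight
  split_ifs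
  · exact le_add_of_nonneg_right (rpow_nonneg hx b)
  · exact le_add_of_nonneg_left (rpow_nonneg hx a)

lemma scaledWeight_le (hx : 0 < x) :
    scaledWeight a b x ≤ 2 * (powerDensity a x + powerDensity b x) := by
  have hpow (p : ℝ) : x ^ (p - 2) = x ^ p / x ^ 2 := by
    rw [rpow_sub hx, rpow_ofNat]
  have hreal : 2 / x ^ 2 * weight a b x ≤ 2 * (x ^ (a - 2) + x ^ (b - 2)) :=
    calc 2 / x ^ 2 * weight a b x ≤ 2 / x ^ 2 * (x ^ a + x ^ b) := by
          gcongr; exact weight_le_rpow_add_rpow hx.le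
      _ = 2 * (x ^ (a - 2) + x ^ (b - 2)) := by rw [hpow, hpow]; ring
  refine (ENNReal.ofReal_le_ofReal hreal).trans_eq ?_
  rw [ENNReal.ofReal_mul zero_le_two, ENNReal.ofReal_add (by positivity) (by positivity),
    ENNReal.ofReal_ofNat, powerDensity, powerDensity]

lemma fluxKernel_scaledWeight_le (hy : 0 ≤ y) :
    fluxKernel (scaledWeight a b) y z ≤
      2 * (fluxKernel (powerDensity a) y z + fluxKernel (powerDensity b) y z) := by
  unfold fluxKernel
  rw [← lintegral_add_left (by fun_prop), ← lintegral_const_mul _ (by fun_prop)]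
  exact setLIntegral_mono' measurableSet_Ioo fun x hx => scaledWeight_le (hy.trans_lt hx.1)

lemma mul_lintegral_add_rpow_mul_expProfile_le_weight (hab : a ≤ 1) (hb : 1 ≤ b) (hz : 0 < z) :
    ENNReal.ofReal z * ∫⁻ y in Ioi 0, ENNReal.ofReal ((y + z) ^ (b - 1)) * expProfile y ≤
      ENNReal.ofReal (2 ^ (b - 1) * (Gamma b + 1)) * ENNReal.ofReal (weight a b z) := by
  have : 0 < Gamma b := Gamma_pos_of_pos (by linarith)
  have hz1 : z ≤ weight a b z := by simpa using rpow_le_weight hab hb hz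
  have hzb : z ^ b ≤ weight a b z := rpow_le_weight (hab.trans hb) le_rfl hz
  have hreal : z * (2 ^ (b - 1) * (Gamma b + z ^ (b - 1))) ≤
      2 ^ (b - 1) * (Gamma b + 1) * weight a b z :=
    calc z * (2 ^ (b - 1) * (Gamma b + z ^ (b - 1)))
        = 2 ^ (b - 1) * (Gamma b * z + z ^ b) := by
          rw [rpow_sub_one hz.ne' b]; field_simp
      _ ≤ 2 ^ (b - 1) * (Gamma b * weight a b z + weight a b z) := by gcongr
      _ = 2 ^ (b - 1) * (Gamma b + 1) * weight a b z := by ring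
  have hmoment := lintegral_add_rpow_mul_expProfile_le (s := b - 1) (by linarith) hz.le
  rw [sub_add_cancel] at hmoment
  refine (mul_le_mul_right hmoment _).trans ?_
  rw [← ENNReal.ofReal_mul hz.le, ← ENNReal.ofReal_mul (by positivity)]
  exact ENNReal.ofReal_le_ofReal hreal

lemma lintegral_fluxKernel_powerDensity_left_le_weight_of_lt_one (ha : a ∈ Ioo (-1) 1)
    (hb : 1 ≤ b) (hz : 0 < z) :
    ∫⁻ y in Ioi 0, ENNReal.ofReal y * fluxKernel (powerDensity a) y z * expProfile y ≤
      ENNReal.ofReal (Gamma ((1 + a) / 2) / ((1 + a) / 2)) * ENNReal.ofReal (weight a b z) := by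
  obtain ⟨ha0, ha1⟩ := ha
  set c := (1 + a) / 2 with hc
  have hc0 : 0 < c := by linarith
  have hac : a = 2 * c - 1 := by linarith
  have : 0 < Gamma c := Gamma_pos_of_pos hc0
  calc ∫⁻ y in Ioi 0, ENNReal.ofReal y * fluxKernel (powerDensity a) y z * expProfile y
      ≤ ∫⁻ y in Ioi 0, ENNReal.ofReal (z ^ c / c) *
          (ENNReal.ofReal (y ^ (c - 1)) * expProfile y) := by
        refine setLIntegral_mono' measurableSet_Ioi fun y hy => ?_
        rw [← mul_assoc]
        refine mul_le_mul_left ?_ _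
        simpa only [← hac] using
          mul_fluxKernel_powerDensity_le_rpow_mul_rpow hc0 (by linarith) hy hz.le
    _ = ENNReal.ofReal (Gamma c / c) * ENNReal.ofReal (z ^ c) := by
        rw [lintegral_const_mul _ (by fun_prop), lintegral_rpow_mul_expProfile hc0,
          ← ENNReal.ofReal_mul (by positivity), ← ENNReal.ofReal_mul (by positivity)]
        ring_nf
    _ ≤ ENNReal.ofReal (Gamma c / c) * ENNReal.ofReal (weight a b z) := by
        gcongr
        exact rpow_le_weight (by linarith) (by linarith) hz

lemma lintegral_fluxKernel_powerDensity_right_le_weight_of_lt_one (ha : a < 1) (hab : a ≤ b)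
    (hy : 0 < y) :
    ∫⁻ z in Ioi 0, ENNReal.ofReal y * fluxKernel (powerDensity a) y z * expProfile z ≤
      ENNReal.ofReal (1 / (1 - a)) * ENNReal.ofReal (weight a b y) := by
  have : 0 < 1 - a := by linarith
  calc ∫⁻ z in Ioi 0, ENNReal.ofReal y * fluxKernel (powerDensity a) y z * expProfile z
      ≤ ∫⁻ z in Ioi 0, ENNReal.ofReal (y ^ a / (1 - a)) * expProfile z :=
        setLIntegral_mono' measurableSet_Ioi fun z hz =>
          mul_le_mul_left (mul_fluxKernel_powerDensity_le_rpow ha hy (mem_Ioi.1 hz).le) _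
    _ = ENNReal.ofReal (1 / (1 - a)) * ENNReal.ofReal (y ^ a) := by
        rw [lintegral_const_mul _ (by fun_prop), lintegral_expProfile_Ioi,
          ← ENNReal.ofReal_mul (by positivity), one_div_mul_eq_div]
        simp [expProfile]
    _ ≤ ENNReal.ofReal (1 / (1 - a)) * ENNReal.ofReal (weight a b y) := by
        gcongr
        exact rpow_le_weight le_rfl hab hy

lemma lintegral_fluxKernel_powerDensity_left_le_weight_of_one_le (ha : a ≤ 1) (hb : 1 ≤ b)
    (hz : 0 < z) :
    ∫⁻ y in Ioi 0, ENNReal.ofReal y * fluxKernel (powerDensity b) y z * expProfile y ≤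
      ENNReal.ofReal (2 ^ (b - 1) * (Gamma b + 1)) * ENNReal.ofReal (weight a b z) := by
  refine le_trans ?_ (mul_lintegral_add_rpow_mul_expProfile_le_weight ha hb hz)
  rw [← lintegral_const_mul _ (by fun_prop)]
  refine setLIntegral_mono' measurableSet_Ioi fun y hy => ?_
  rw [← mul_assoc]
  exact mul_le_mul_left (mul_fluxKernel_powerDensity_le_mul_add_rpow hb hy) _

lemma lintegral_fluxKernel_powerDensity_right_le_weight_of_one_lt (ha : a ≤ 1) (hb : 1 < b)
    (hy : 0 < y) :
    ∫⁻ z in Ioi 0, ENNReal.ofReal y * fluxKernel (powerDensity b) y z * expProfile z ≤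
      ENNReal.ofReal (1 / (b - 1)) * ENNReal.ofReal (2 ^ (b - 1) * (Gamma b + 1)) *
        ENNReal.ofReal (weight a b y) := by
  have : 0 < b - 1 := by linarith
  rw [mul_assoc]
  refine le_trans ?_ (mul_le_mul_right
    (mul_lintegral_add_rpow_mul_expProfile_le_weight ha hb.le hy) _)
  rw [← lintegral_const_mul _ (by fun_prop), ← lintegral_const_mul _ (by fun_prop)]
  refine setLIntegral_mono' measurableSet_Ioi fun z hz => ?_
  calc ENNReal.ofReal y * fluxKernel (powerDensity b) y z * expProfile z
      ≤ ENNReal.ofReal y * ENNReal.ofReal ((y + z) ^ (b - 1) / (b - 1)) * expProfile z := by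
        gcongr
        exact fluxKernel_powerDensity_le_add_rpow_div hb hy (mem_Ioi.1 hz).le
    _ = ENNReal.ofReal (1 / (b - 1)) *
          (ENNReal.ofReal y * (ENNReal.ofReal ((z + y) ^ (b - 1)) * expProfile z)) := by
        rw [← one_div_mul_eq_div, ENNReal.ofReal_mul (by positivity), add_comm y z]
        ring

end WeightBounds

section FluxBounds

variable {a b : ℝ}

lemma exists_lintegral_scaledWeight_mul_flux_left_le (ha : a ∈ Ioo (-1) 1) (hb : 1 < b) :
    ∃ C : ℝ≥0, ∀ h, Measurable h →
      ∫⁻ x in Ioi 0, scaledWeight a b x * flux expProfile h x ≤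
        C * ∫⁻ z in Ioi 0, h z * ENNReal.ofReal (weight a b z) := by
  refine ⟨2 * ((Gamma ((1 + a) / 2) / ((1 + a) / 2)).toNNReal +
    (2 ^ (b - 1) * (Gamma b + 1)).toNNReal), fun h hh =>
      lintegral_mul_flux_le_of_left (by fun_prop) (by fun_prop) hh fun z hz => ?_⟩
  have hK (p : ℝ) : Measurable fun y => fluxKernel (powerDensity p) y z :=
    (measurable_fluxKernel (measurable_powerDensity p)).comp measurable_prodMk_right
  calc ∫⁻ y in Ioi 0, ENNReal.ofReal y * fluxKernel (scaledWeight a b) y z * expProfile y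
      ≤ ∫⁻ y in Ioi 0, 2 * (ENNReal.ofReal y * fluxKernel (powerDensity a) y z * expProfile y +
          ENNReal.ofReal y * fluxKernel (powerDensity b) y z * expProfile y) :=
        setLIntegral_mono' measurableSet_Ioi fun y hy =>
          (mul_le_mul_left (mul_le_mul_right
            (fluxKernel_scaledWeight_le (mem_Ioi.1 hy).le) _) _).trans_eq (by ring)
    _ ≤ 2 * (ENNReal.ofReal (Gamma ((1 + a) / 2) / ((1 + a) / 2)) * ENNReal.ofReal (weight a b z) +
          ENNReal.ofReal (2 ^ (b - 1) * (Gamma b + 1)) * ENNReal.ofReal (weight a b z)) := by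
        rw [lintegral_const_mul _ (by fun_prop), lintegral_add_left (by fun_prop)]
        gcongr
        · exact lintegral_fluxKernel_powerDensity_left_le_weight_of_lt_one ha hb.le hz
        · exact lintegral_fluxKernel_powerDensity_left_le_weight_of_one_le ha.2.le hb.le hz
    _ = _ := by
        simp only [ENNReal.coe_mul, ENNReal.coe_add, ENNReal.coe_ofNat, ENNReal.ofReal]
        ring

lemma exists_lintegral_scaledWeight_mul_flux_right_le (ha : a < 1) (hb : 1 < b) :
    ∃ C : ℝ≥0, ∀ h, Measurable h →
      ∫⁻ x in Ioi 0, scaledWeight a b x * flux h expProfile x ≤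
        C * ∫⁻ y in Ioi 0, h y * ENNReal.ofReal (weight a b y) := by
  refine ⟨2 * ((1 / (1 - a)).toNNReal +
    (1 / (b - 1)).toNNReal * (2 ^ (b - 1) * (Gamma b + 1)).toNNReal), fun h hh =>
      lintegral_mul_flux_le_of_right (by fun_prop) hh (by fun_prop) fun y hy => ?_⟩
  have hK (p : ℝ) : Measurable fun z => fluxKernel (powerDensity p) y z :=
    (measurable_fluxKernel (measurable_powerDensity p)).comp measurable_prodMk_left
  calc ∫⁻ z in Ioi 0, ENNReal.ofReal y * fluxKernel (scaledWeight a b) y z * expProfile z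
      ≤ ∫⁻ z in Ioi 0, 2 * (ENNReal.ofReal y * fluxKernel (powerDensity a) y z * expProfile z +
          ENNReal.ofReal y * fluxKernel (powerDensity b) y z * expProfile z) :=
        lintegral_mono fun z =>
          (mul_le_mul_left (mul_le_mul_right
            (fluxKernel_scaledWeight_le hy.le) _) _).trans_eq (by ring)
    _ ≤ 2 * (ENNReal.ofReal (1 / (1 - a)) * ENNReal.ofReal (weight a b y) +
          ENNReal.ofReal (1 / (b - 1)) * ENNReal.ofReal (2 ^ (b - 1) * (Gamma b + 1)) *
            ENNReal.ofReal (weight a b y)) := by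
        rw [lintegral_const_mul _ (by fun_prop), lintegral_add_left (by fun_prop)]
        gcongr
        · exact lintegral_fluxKernel_powerDensity_right_le_weight_of_lt_one ha
            (ha.trans hb).le hy
        · exact lintegral_fluxKernel_powerDensity_right_le_weight_of_one_lt ha.le hb hy
    _ = _ := by
        simp only [ENNReal.coe_mul, ENNReal.coe_add, ENNReal.coe_ofNat, ENNReal.ofReal]
        ring

end FluxBounds

/-- The norm `Xnorm a b`, as a lower integral with values in `[0, ∞]`. -/
noncomputable def xenorm (a b : ℝ) (g : ℝ → ℝ) : ℝ≥0∞ :=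
  ∫⁻ x in Ioi 0, ‖g x‖ₑ * ENNReal.ofReal (weight a b x)

section ExtendedNorm

variable {a b : ℝ} {g g' : ℝ → ℝ}

lemma xenorm_congr_ae (h : g =ᵐ[volume.restrict (Ioi 0)] g') : xenorm a b g = xenorm a b g' :=
  lintegral_congr_ae <| h.mono fun x hx => by simp only [hx]

lemma xenorm_eq_lintegral_enorm (a b : ℝ) (g : ℝ → ℝ) :
    xenorm a b g = ∫⁻ x in Ioi 0, ‖g x * weight a b x‖ₑ :=
  setLIntegral_congr_fun measurableSet_Ioi fun x hx => by
    simp only [enorm_mul, Real.enorm_of_nonneg (weight_pos a b hx).le]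

lemma memX_iff : MemX a b g ↔
    AEMeasurable g (volume.restrict (Ioi 0)) ∧ xenorm a b g < ∞ := by
  have hw : ∀ᵐ x ∂volume.restrict (Ioi 0), g x * weight a b x * (weight a b x)⁻¹ = g x :=
    (ae_restrict_iff' measurableSet_Ioi).2 <| Eventually.of_forall fun x hx =>
      mul_inv_cancel_right₀ (weight_pos a b hx).ne' _
  rw [MemX, IntegrableOn, Integrable, HasFiniteIntegral, xenorm_eq_lintegral_enorm,
    aestronglyMeasurable_iff_aemeasurable]
  refine and_congr_left fun _ => ⟨fun h => ?_, fun h => ?_⟩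
  · exact (h.mul (by fun_prop)).congr hw
  · exact h.mul (by fun_prop)

lemma Xnorm_eq_toReal_xenorm (hg : MemX a b g) : Xnorm a b g = (xenorm a b g).toReal := by
  rw [xenorm_eq_lintegral_enorm, ← integral_norm_eq_lintegral_enorm hg.aestronglyMeasurable]
  exact setIntegral_congr_fun measurableSet_Ioi fun x hx => by
    simp only [norm_mul, norm_eq_abs, abs_of_pos (weight_pos a b hx)]

end ExtendedNorm

section Lop

variable {a b : ℝ} {g g' : ℝ → ℝ}

lemma Lop_ae_congr (h : g =ᵐ[volume.restrict (Ioi 0)] g') :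
    Lop g =ᵐ[volume.restrict (Ioi 0)] Lop g' := by
  have hsub {s : Set ℝ} (hs : s ⊆ Ioi 0) : g =ᵐ[volume.restrict s] g' :=
    ae_restrict_of_ae_restrict_of_subset hs h
  filter_upwards [h] with x hx
  unfold Lop
  rw [hx]
  congr 2
  refine integral_congr_ae ?_
  filter_upwards [hsub fun y (hy : y ∈ Ioo 0 x) => hy.1, ae_restrict_mem measurableSet_Ioo]
    with y hy hyx
  refine integral_congr_ae ?_
  filter_upwards [hsub (Ioi_subset_Ioi (sub_pos.2 hyx.2).le)] with z hz
  rw [hy, hz]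

lemma measurable_Lop (hg : Measurable g) : Measurable (Lop g) := by
  have hinner : StronglyMeasurable fun p : ℝ × ℝ =>
      ∫ z in Ioi (p.1 - p.2), (p.2 * exp (-p.2) * g z + p.2 * g p.2 * exp (-z)) :=
    stronglyMeasurable_setIntegral_section (s := {q : (ℝ × ℝ) × ℝ | q.1.1 - q.1.2 < q.2})
      (f := fun p z => p.2 * exp (-p.2) * g z + p.2 * g p.2 * exp (-z))
      (measurableSet_lt (by fun_prop) (by fun_prop))
      (by unfold Function.uncurry; fun_prop)
  have houter : StronglyMeasurable fun x =>
      ∫ y in Ioo 0 x, ∫ z in Ioi (x - y), (y * exp (-y) * g z + y * g y * exp (-z)) :=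
    stronglyMeasurable_setIntegral_section (s := {p : ℝ × ℝ | p.2 ∈ Ioo 0 p.1})
      (f := fun x y => ∫ z in Ioi (x - y), (y * exp (-y) * g z + y * g y * exp (-z)))
      (measurableSet_setOf_mem_Ioo (by fun_prop) (by fun_prop) (by fun_prop)) hinner
  have := houter.measurable
  unfold Lop
  fun_prop

lemma aemeasurable_Lop (hg : AEMeasurable g (volume.restrict (Ioi 0))) :
    AEMeasurable (Lop g) (volume.restrict (Ioi 0)) :=
  (measurable_Lop hg.measurable_mk).aemeasurable.congr (Lop_ae_congr hg.ae_eq_mk).symm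

lemma enorm_setIntegral_tail_le (hg : Measurable g) {y : ℝ} (hy : 0 ≤ y) (t : ℝ) :
    ‖∫ z in Ioi t, (y * exp (-y) * g z + y * g y * exp (-z))‖ₑ ≤
      ENNReal.ofReal y * expProfile y * (∫⁻ z in Ioi t, ‖g z‖ₑ) +
        ENNReal.ofReal y * ‖g y‖ₑ * ∫⁻ z in Ioi t, expProfile z := by
  have hterm (z : ℝ) : ‖y * exp (-y) * g z + y * g y * exp (-z)‖ₑ ≤
      ENNReal.ofReal y * expProfile y * ‖g z‖ₑ + ENNReal.ofReal y * ‖g y‖ₑ * expProfile z := by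
    refine (enorm_add_le _ _).trans_eq ?_
    simp only [enorm_mul, expProfile, Real.enorm_of_nonneg hy,
      Real.enorm_of_nonneg (exp_pos _).le]
  calc ‖∫ z in Ioi t, (y * exp (-y) * g z + y * g y * exp (-z))‖ₑ
      ≤ ∫⁻ z in Ioi t,
          (ENNReal.ofReal y * expProfile y * ‖g z‖ₑ + ENNReal.ofReal y * ‖g y‖ₑ * expProfile z) :=
        (enorm_integral_le_lintegral_enorm _).trans (lintegral_mono hterm)
    _ = _ := by
        rw [lintegral_add_left (by fun_prop), lintegral_const_mul _ (by fun_prop),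
          lintegral_const_mul _ (by fun_prop)]

lemma enorm_Lop_le (hg : Measurable g) (x : ℝ) :
    ‖Lop g x‖ₑ ≤ ‖g x‖ₑ + ENNReal.ofReal (2 / x ^ 2) *
      (flux expProfile (fun y => ‖g y‖ₑ) x + flux (fun y => ‖g y‖ₑ) expProfile x) := by
  have htail : Measurable fun y => ∫⁻ z in Ioi (x - y), ‖g z‖ₑ :=
    (measurable_setLIntegral_Ioi _).comp (by fun_prop)
  have hflux : ‖∫ y in Ioo 0 x, ∫ z in Ioi (x - y), (y * exp (-y) * g z + y * g y * exp (-z))‖ₑ ≤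
      flux expProfile (fun y => ‖g y‖ₑ) x + flux (fun y => ‖g y‖ₑ) expProfile x := by
    unfold flux
    rw [← lintegral_add_left (by fun_prop)]
    exact (enorm_integral_le_lintegral_enorm _).trans <|
      setLIntegral_mono' measurableSet_Ioo fun y hy => enorm_setIntegral_tail_le hg hy.1.le _
  refine enorm_sub_le.trans ?_
  rw [enorm_mul, Real.enorm_of_nonneg (show 0 ≤ 2 / x ^ 2 by positivity)]
  gcongr

lemma xenorm_Lop_le (hg : Measurable g) :
    xenorm a b (Lop g) ≤ xenorm a b g +
      ((∫⁻ x in Ioi 0, scaledWeight a b x * flux expProfile (fun y => ‖g y‖ₑ) x) +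
        ∫⁻ x in Ioi 0, scaledWeight a b x * flux (fun y => ‖g y‖ₑ) expProfile x) := by
  have hflux : Measurable (flux expProfile fun y => ‖g y‖ₑ) := measurable_flux (by fun_prop) _
  have hscaled (x : ℝ) :
      ENNReal.ofReal (2 / x ^ 2) * ENNReal.ofReal (weight a b x) = scaledWeight a b x :=
    (ENNReal.ofReal_mul (by positivity)).symm
  unfold xenorm
  rw [← lintegral_add_left (by fun_prop), ← lintegral_add_left (by fun_prop)]
  refine lintegral_mono fun x => (mul_le_mul_left (enorm_Lop_le hg x) _).trans_eq ?_
  simp only [← hscaled]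
  ring

theorem exists_xenorm_Lop_le (ha : a ∈ Ioo (-1) 1) (hb : 1 < b) :
    ∃ C : ℝ≥0, 0 < C ∧ ∀ g, AEMeasurable g (volume.restrict (Ioi 0)) →
      xenorm a b (Lop g) ≤ C * xenorm a b g := by
  obtain ⟨C₁, hC₁⟩ := exists_lintegral_scaledWeight_mul_flux_left_le ha hb
  obtain ⟨C₂, hC₂⟩ := exists_lintegral_scaledWeight_mul_flux_right_le ha.2 hb
  refine ⟨1 + (C₁ + C₂), by positivity, fun g hg => ?_⟩
  obtain ⟨g', hg', hgg'⟩ := hg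
  rw [xenorm_congr_ae hgg', xenorm_congr_ae (Lop_ae_congr hgg')]
  calc xenorm a b (Lop g') ≤ xenorm a b g' + (C₁ * xenorm a b g' + C₂ * xenorm a b g') :=
        (xenorm_Lop_le hg').trans <| by
          gcongr
          · exact hC₁ _ (by fun_prop)
          · exact hC₂ _ (by fun_prop)
    _ = _ := by push_cast; ring

end Lop

theorem stmt10 (a b : ℝ) (ha : a ∈ Ioo (-1:ℝ) 1) (hb : 1 < b) :
    ∃ C > (0:ℝ), ∀ g : ℝ → ℝ, MemX a b g →
      MemX a b (Lop g) ∧ Xnorm a b (Lop g) ≤ C * Xnorm a b g := by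
  obtain ⟨C, hC, hbound⟩ := exists_xenorm_Lop_le ha hb
  refine ⟨C, hC, fun g hg => ?_⟩
  obtain ⟨hmeas, hfin⟩ := memX_iff.1 hg
  have hfin' : C * xenorm a b g < ∞ := ENNReal.mul_lt_top ENNReal.coe_lt_top hfin
  have hLg : MemX a b (Lop g) :=
    memX_iff.2 ⟨aemeasurable_Lop hmeas, (hbound g hmeas).trans_lt hfin'⟩
  refine ⟨hLg, ?_⟩
  rw [Xnorm_eq_toReal_xenorm hLg, Xnorm_eq_toReal_xenorm hg, ← ENNReal.coe_toReal C,
    ← ENNReal.toReal_mul]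
  exact ENNReal.toReal_mono hfin'.ne (hbound g hmeas)
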